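/- arXiv:2204.08312 — 6 statements merged into one kernel-verified Lean document; each statement's English description precedes it below -/
import Mathlib

section
/- Let p ∈ (0,1], ε ∈ (0,1), and let s be a positive integer with s ≥ 4·log₂(1/ε). Under the measure μ_p, define T(ω) to be the least t ∈ ℕ such that exactly s of the coordinates ω(0),…,ω(t−1) equal true (and T(ω) = ∞ if no such t exists). Then the μ_p-probability of the event { ω : (1/2)·s·(1/p) ≤ T(ω) ≤ 2·s·(1/p) } is at least 1 − 2ε. -/
open MeasureTheory

/-- The least `t : ℕ` such that exactly `s` of the coordinates `ω 0, …, ω (t-1)` equal `true`,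
as an element of `ℕ∞` (equal to `⊤` if no such `t` exists). -/
noncomputable def succTime (s : ℕ) (ω : ℕ → Bool) : ℕ∞ :=
  sInf ((fun t : ℕ => (t : ℕ∞)) ''
    {t : ℕ | ((Finset.range t).filter fun i => ω i = true).card = s})


lemma wt_markov (p : ℝ) (hp0 : 0 < p) (hp1 : p ≤ 1)
    (μ : Measure (ℕ → Bool))
    (hμ : ∀ (S : Finset ℕ) (g : ℕ → Bool),
      μ {ω | ∀ i ∈ S, ω i = g i} = ∏ i ∈ S, ENNReal.ofReal (if g i then p else 1 - p))
    (n : ℕ) (P : ℕ → Prop) (θ c : ℝ) (hθ : 0 < θ) (hc : 0 < c)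
    (hP : ∀ k, P k → 1 ≤ c * θ ^ k) :
    μ {ω | P ((Finset.range n).filter fun i => ω i = true).card} ≤
      ENNReal.ofReal (c * (p * θ + (1 - p)) ^ n) := by
  classical
  have hq : 0 ≤ 1 - p := by linarith
  have hcyl : ∀ A ∈ (Finset.range n).powerset,
      μ {ω | ∀ i ∈ Finset.range n, ω i = decide (i ∈ A)} =
        ENNReal.ofReal (p ^ A.card * (1 - p) ^ (n - A.card)) := by
    intro A hA
    rw [Finset.mem_powerset] at hA
    rw [hμ _ (fun i => decide (i ∈ A)), ← ENNReal.ofReal_prod_of_nonneg]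
    · congr 1
      simp only [decide_eq_true_eq]
      rw [Finset.prod_ite, Finset.prod_const, Finset.prod_const,
        Finset.filter_mem_eq_inter, Finset.inter_eq_right.2 hA,
        Finset.filter_notMem_eq_sdiff, Finset.card_sdiff_of_subset hA, Finset.card_range]
    · intro i _
      split_ifs <;> linarith
  have hsub : {ω : ℕ → Bool | P ((Finset.range n).filter fun i => ω i = true).card} ⊆
      ⋃ A ∈ (Finset.range n).powerset.filter (fun A => P A.card),
        {ω | ∀ i ∈ Finset.range n, ω i = decide (i ∈ A)} := by
    intro ω hω
    simp only [Set.mem_iUnion]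
    refine ⟨(Finset.range n).filter fun i => ω i = true, ?_, ?_⟩
    · rw [Finset.mem_filter]
      exact ⟨Finset.mem_powerset.2 (Finset.filter_subset _ _), hω⟩
    · intro i hi
      cases h : ω i <;> simp_all
  calc _ ≤ _ := measure_mono hsub
    _ ≤ _ := measure_biUnion_finset_le _ _
    _ ≤ ∑ A ∈ (Finset.range n).powerset.filter (fun A => P A.card),
          ENNReal.ofReal (c * ((p * θ) ^ A.card * (1 - p) ^ (n - A.card))) := by
        apply Finset.sum_le_sum
        intro A hA
        rw [Finset.mem_filter] at hA
        rw [hcyl A hA.1]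
        apply ENNReal.ofReal_le_ofReal
        have h1 := hP _ hA.2
        have h2 : 0 ≤ p ^ A.card * (1 - p) ^ (n - A.card) := by positivity
        calc _ ≤ (c * θ ^ A.card) * (p ^ A.card * (1 - p) ^ (n - A.card)) :=
              le_mul_of_one_le_left h2 h1
          _ = _ := by rw [mul_pow]; ring
    _ ≤ ∑ A ∈ (Finset.range n).powerset,
          ENNReal.ofReal (c * ((p * θ) ^ A.card * (1 - p) ^ (n - A.card))) :=
        Finset.sum_le_sum_of_subset (Finset.filter_subset _ _)
    _ = _ := by
        rw [← ENNReal.ofReal_sum_of_nonneg (fun A _ => by positivity), ← Finset.mul_sum]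
        have := Finset.sum_pow_mul_eq_add_pow (p * θ) (1 - p) (Finset.range n)
        rw [Finset.card_range] at this
        rw [this]

lemma wt_pow_le (x : ℝ) (hx : 0 ≤ 1 + x) (n : ℕ) : (1 + x) ^ n ≤ Real.exp (n * x) := by
  rw [Real.exp_nat_mul]
  apply pow_le_pow_left₀ hx
  linarith [Real.add_one_le_exp x]

lemma wt_det (s : ℕ) (hs : 0 < s) (ω : ℕ → Bool) (m n : ℕ)
    (hm : ((Finset.range m).filter fun i => ω i = true).card < s)
    (hn : s ≤ ((Finset.range n).filter fun i => ω i = true).card) :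
    ∃ t : ℕ, succTime s ω = (t : ℕ∞) ∧ m < t ∧ t ≤ n := by
  classical
  set X : ℕ → ℕ := fun t => ((Finset.range t).filter fun i => ω i = true).card with hX
  have hmono : Monotone X := fun a b hab =>
    Finset.card_le_card (Finset.filter_subset_filter _ (Finset.range_mono hab))
  have hstep : ∀ t, X (t + 1) ≤ X t + 1 := by
    intro t
    simp only [hX, Finset.range_add_one, Finset.filter_insert]
    split_ifs
    · exact Finset.card_insert_le _ _
    · omega
  have hex : ∃ t, s ≤ X t := ⟨n, hn⟩
  have hspec := Nat.find_spec hex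
  have hmin := fun {k} => Nat.find_min' hex (m := k)
  have hlt := fun {k} => Nat.find_min hex (m := k)
  set t := Nat.find hex
  have ht : X t = s := by
    rcases Nat.eq_zero_or_pos t with h0 | h0
    · rw [h0] at hspec
      simp [hX] at hspec
      omega
    · have h1 := hstep (t - 1)
      have h2 := hlt (k := t - 1) (by omega)
      rw [Nat.sub_add_cancel h0] at h1
      omega
  refine ⟨t, ?_, ?_, hmin hn⟩
  · unfold succTime
    apply IsLeast.csInf_eq
    refine ⟨⟨t, ht, rfl⟩, ?_⟩
    rintro _ ⟨u, hu, rfl⟩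
    have : t ≤ u := hmin (le_of_eq (Eq.symm hu))
    exact Nat.cast_le.2 this
  · by_contra h
    have := hmono (not_lt.1 h)
    have hm' : X m < s := hm
    omega

/-- Under the i.i.d. Bernoulli(p) product measure on `ℕ → Bool`, the waiting time `T` for
`s` successes satisfies `(1/2)·s·(1/p) ≤ T ≤ 2·s·(1/p)` with probability at least `1 - 2ε`,
provided `s ≥ 4·log₂(1/ε)`. -/
theorem waiting_time_concentration
    (p ε : ℝ) (hp0 : 0 < p) (hp1 : p ≤ 1) (hε0 : 0 < ε) (hε1 : ε < 1)
    (s : ℕ) (hs : 0 < s) (hsε : 4 * Real.logb 2 (1 / ε) ≤ (s : ℝ))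
    (μ : Measure (ℕ → Bool)) [IsProbabilityMeasure μ]
    (hμ : ∀ (S : Finset ℕ) (g : ℕ → Bool),
      μ {ω | ∀ i ∈ S, ω i = g i} = ∏ i ∈ S, ENNReal.ofReal (if g i then p else 1 - p)) :
    ENNReal.ofReal (1 - 2 * ε) ≤
      μ {ω | ∃ t : ℕ, succTime s ω = (t : ℕ∞) ∧
        (1 / 2) * (s : ℝ) * (1 / p) ≤ (t : ℝ) ∧ (t : ℝ) ≤ 2 * (s : ℝ) * (1 / p)} := by
  have hl2 := Real.log_two_gt_d9
  have hl2' := Real.log_two_lt_d9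
  have hs1 : (1 : ℝ) ≤ s := by exact_mod_cast hs
  have hε : Real.exp (-(s * Real.log 2 / 4)) ≤ ε := by
    rw [← Real.le_log_iff_exp_le hε0]
    rw [Real.logb, one_div, Real.log_inv] at hsε
    have h : 4 * (-Real.log ε / Real.log 2) * Real.log 2 ≤ s * Real.log 2 :=
      mul_le_mul_of_nonneg_right hsε (by linarith)
    have h' : 4 * (-Real.log ε / Real.log 2) * Real.log 2 = 4 * (-Real.log ε) := by
      field_simp
    linarith
  have h2pow : ∀ k : ℕ, (2 : ℝ) ^ k = Real.exp (k * Real.log 2) := by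
    intro k
    rw [Real.exp_nat_mul, Real.exp_log two_pos]
  set k := ⌈(1 / 2) * (s : ℝ) * (1 / p)⌉₊ with hk
  have hkpos : 0 < k := Nat.ceil_pos.2 (by positivity)
  set m := k - 1 with hm
  have hmlt : (m : ℝ) < (1 / 2) * (s : ℝ) * (1 / p) := Nat.lt_ceil.1 (by omega)
  have hmp : (m : ℝ) * p < s / 2 := by
    calc (m : ℝ) * p < ((1 / 2) * (s : ℝ) * (1 / p)) * p := by gcongr
      _ = s / 2 := by field_simp
  set n := ⌊2 * (s : ℝ) * (1 / p)⌋₊ with hn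
  have hnle : (n : ℝ) ≤ 2 * (s : ℝ) * (1 / p) := Nat.floor_le (by positivity)
  have hnp : 2 * (s : ℝ) - 1 ≤ n * p := by
    have h1 : 2 * (s : ℝ) * (1 / p) < n + 1 := Nat.lt_floor_add_one _
    have h2 : 2 * (s : ℝ) * (1 / p) * p ≤ (n + 1) * p := by gcongr
    have h3 : 2 * (s : ℝ) * (1 / p) * p = 2 * s := by field_simp
    nlinarith
  have hB1 : μ {ω | s ≤ ((Finset.range m).filter fun i => ω i = true).card} ≤
      ENNReal.ofReal ε := by
    refine (wt_markov p hp0 hp1 μ hμ m (fun j => s ≤ j) 2 (2 ^ s)⁻¹ (by norm_num)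
      (by positivity) ?_).trans (ENNReal.ofReal_le_ofReal ?_)
    · intro j hj
      rw [← div_eq_inv_mul, one_le_div (by positivity)]
      exact pow_le_pow_right₀ (by norm_num) hj
    · have h1 := wt_pow_le p (by linarith) m
      have h2 : p * 2 + (1 - p) = 1 + p := by ring
      rw [h2, h2pow, ← Real.exp_neg]
      calc _ ≤ Real.exp (-(s * Real.log 2)) * Real.exp (m * p) := by gcongr
        _ ≤ Real.exp (-(s * Real.log 2 / 4)) := by
          rw [← Real.exp_add]
          apply Real.exp_le_exp.2
          nlinarith
        _ ≤ ε := hε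
  have hB2 : μ {ω | ((Finset.range n).filter fun i => ω i = true).card < s} ≤
      ENNReal.ofReal ε := by
    refine (wt_markov p hp0 hp1 μ hμ n (fun j => j < s) (1 / 2) (2 ^ (s - 1)) (by norm_num)
      (by positivity) ?_).trans (ENNReal.ofReal_le_ofReal ?_)
    · intro j hj
      rw [one_div, inv_pow, ← div_eq_mul_inv, one_le_div (by positivity)]
      exact pow_le_pow_right₀ (by norm_num) (by omega)
    · have h1 := wt_pow_le (-(p / 2)) (by linarith) n
      have h2 : p * (1 / 2) + (1 - p) = 1 + -(p / 2) := by ring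
      rw [h2, h2pow, Nat.cast_sub hs]
      calc _ ≤ Real.exp ((s - (1 : ℕ)) * Real.log 2) * Real.exp (n * -(p / 2)) := by gcongr
        _ ≤ Real.exp (-(s * Real.log 2 / 4)) := by
          rw [← Real.exp_add]
          apply Real.exp_le_exp.2
          push_cast
          nlinarith
        _ ≤ ε := hε
  set E := {ω : ℕ → Bool | ∃ t : ℕ, succTime s ω = (t : ℕ∞) ∧
        (1 / 2) * (s : ℝ) * (1 / p) ≤ (t : ℝ) ∧ (t : ℝ) ≤ 2 * (s : ℝ) * (1 / p)} with hE
  have hcover : (Set.univ : Set (ℕ → Bool)) ⊆ E ∪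
      ({ω | s ≤ ((Finset.range m).filter fun i => ω i = true).card} ∪
       {ω | ((Finset.range n).filter fun i => ω i = true).card < s}) := by
    intro ω _
    by_cases h1 : s ≤ ((Finset.range m).filter fun i => ω i = true).card
    · exact Or.inr (Or.inl h1)
    by_cases h2 : ((Finset.range n).filter fun i => ω i = true).card < s
    · exact Or.inr (Or.inr h2)
    obtain ⟨t, ht, hmt, htn⟩ := wt_det s hs ω m n (not_le.1 h1) (not_lt.1 h2)
    refine Or.inl ⟨t, ht, ?_, ?_⟩
    · exact Nat.ceil_le.1 (by omega)
    · exact le_trans (by exact_mod_cast htn) hnle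
  have hfin : (1 : ENNReal) ≤ μ E + ENNReal.ofReal (2 * ε) := by
    calc (1 : ENNReal) = μ Set.univ := measure_univ.symm
      _ ≤ _ := measure_mono hcover
      _ ≤ _ := measure_union_le _ _
      _ ≤ μ E + (ENNReal.ofReal ε + ENNReal.ofReal ε) := by
        gcongr
        exact (measure_union_le _ _).trans (add_le_add hB1 hB2)
      _ = _ := by rw [← ENNReal.ofReal_add hε0.le hε0.le, two_mul]
  rw [ENNReal.ofReal_sub _ (by positivity), ENNReal.ofReal_one]
  exact tsub_le_iff_right.2 hfin
end

section
/- Let N be a positive integer, s ∈ (0, 1/8], and ε ∈ (0,1). Let u : Fin N → Bool be a string in which at most s·N coordinates equal true, and let m be a natural number with m ≤ (1/(2s))·ln(1/ε). If m positions i₁,…,i_m are chosen independently and uniformly at random from Fin N, then the probability that u(i_j) = false for all j = 1,…,m is at least (1−s)^m, and moreover (1−s)^m > ε. -/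
open MeasureTheory

/-- If a string `u` of length `N` has at most `s·N` ones, `s ∈ (0, 1/8]`, and
`m ≤ (1/(2s))·ln(1/ε)` positions are probed independently and uniformly at random, then the
probability that all probes read `false` is at least `(1-s)^m`, and moreover `(1-s)^m > ε`. -/
theorem all_probes_zero
    (N : ℕ) [NeZero N] (s ε : ℝ) (hs0 : 0 < s) (hs8 : s ≤ 1 / 8)
    (hε0 : 0 < ε) (hε1 : ε < 1) (u : Fin N → Bool)
    (hu : ((Finset.univ.filter fun i => u i = true).card : ℝ) ≤ s * (N : ℝ))
    (m : ℕ) (hm : (m : ℝ) ≤ (1 / (2 * s)) * Real.log (1 / ε)) :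
    ENNReal.ofReal ((1 - s) ^ m) ≤
        (Measure.pi fun _ : Fin m => (PMF.uniformOfFintype (Fin N)).toMeasure)
          {f : Fin m → Fin N | ∀ j, u (f j) = false}
      ∧ ε < (1 - s) ^ m := by
  constructor
  · have hset : {f : Fin m → Fin N | ∀ j, u (f j) = false}
        = Set.pi Set.univ (fun _ : Fin m => {i : Fin N | u i = false}) := by
      ext f; simp
    rw [hset, Measure.pi_pi, Finset.prod_const, Finset.card_univ, Fintype.card_fin,
      ENNReal.ofReal_pow (by linarith)]
    gcongr
    have hN : (0 : ℝ) < N := by exact_mod_cast Nat.pos_of_ne_zero (NeZero.ne N)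
    rw [PMF.toMeasure_uniformOfFintype_apply _ (Set.toFinite _).measurableSet]
    have hc : ((Finset.univ.filter fun i => u i = true).card : ℝ)
        + (Fintype.card {i : Fin N | u i = false} : ℝ) = N := by
      have h := Finset.card_filter_add_card_filter_not (s := (Finset.univ : Finset (Fin N)))
        (fun i => u i = true)
      have h2 : Fintype.card {i : Fin N | u i = false}
          = (Finset.univ.filter fun i => ¬ u i = true).card := by
        rw [← Set.toFinset_card]
        congr 1
        ext i; simp
      rw [h2]
      simp only [Finset.card_univ, Fintype.card_fin] at h
      exact_mod_cast h
    rw [Fintype.card_fin, ← ENNReal.ofReal_natCast N, ← ENNReal.ofReal_natCast,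
      ← ENNReal.ofReal_div_of_pos hN]
    apply ENNReal.ofReal_le_ofReal
    rw [le_div_iff₀ hN]
    linarith
  · have h1 : 0 < 1 - s := by linarith
    rw [← Real.log_lt_log_iff hε0 (pow_pos h1 m), Real.log_pow]
    have hL : Real.log ε < 0 := Real.log_neg hε0 hε1
    have h2 : 2 * s * m ≤ -Real.log ε := by
      rw [one_div ε, Real.log_inv, one_div_mul_eq_div, le_div_iff₀ (by linarith)] at hm
      linarith
    have h3 : -(8 / 7 * s) ≤ Real.log (1 - s) := by
      have h := Real.one_sub_inv_le_log_of_pos h1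
      have h4 : (1 - s)⁻¹ ≤ 1 + 8 / 7 * s := by
        rw [inv_le_iff_one_le_mul₀ h1]
        nlinarith
      linarith
    have h5 := mul_le_mul_of_nonneg_left h3 (Nat.cast_nonneg (α := ℝ) m)
    nlinarith
end

section
/- Let n be a positive integer, ε ∈ (0,1), p ∈ (0,1], and let s be a positive integer with s ≥ 4·log₂(1/ε). Under the measure μ_p, define T(ω) to be the least t ∈ ℕ such that exactly s of the coordinates ω(0),…,ω(t−1) equal true (T(ω) = ∞ if no such t exists), and define the estimate p̃(ω) := s / T(ω) if T(ω) ≤ 2·s·2ⁿ, and p̃(ω) := 2^{−n} otherwise. Then with μ_p-probability at least 1 − 2ε the following holds: if p ≥ 2^{−n} then p/2 ≤ p̃(ω) ≤ 2·p and T(ω) ≤ 2·s·(1/p), while if p < 2^{−n} then p̃(ω) ≤ 2^{−(n−1)}. -/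
open MeasureTheory
open scoped Classical

/-- The probability estimate: `s / T(ω)` if `T(ω) ≤ 2·s·2ⁿ`, and `2^(-n)` otherwise. -/
noncomputable def pEst (s n : ℕ) (ω : ℕ → Bool) : ℝ :=
  if succTime s ω ≤ ((2 * s * 2 ^ n : ℕ) : ℕ∞) then
    (s : ℝ) / ((succTime s ω).toNat : ℝ)
  else (2 : ℝ) ^ (-(n : ℤ))

noncomputable def cnt (t : ℕ) (ω : ℕ → Bool) : ℕ :=
  ((Finset.range t).filter fun i => ω i = true).card

lemma cnt_mono (ω : ℕ → Bool) : Monotone (fun t => cnt t ω) := by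
  intro a b h
  exact Finset.card_le_card (Finset.filter_subset_filter _ (Finset.range_mono h))

lemma cnt_succ_le (t : ℕ) (ω : ℕ → Bool) : cnt (t + 1) ω ≤ cnt t ω + 1 := by
  unfold cnt
  rw [Finset.range_add_one, Finset.filter_insert]
  split_ifs
  · exact Finset.card_insert_le _ _
  · omega

lemma cnt_hit (s : ℕ) (ω : ℕ → Bool) (t : ℕ) (h : s ≤ cnt t ω) : ∃ u ≤ t, cnt u ω = s := by
  induction t with
  | zero => exact ⟨0, le_rfl, by have : cnt 0 ω = 0 := by simp [cnt]
                                 omega⟩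
  | succ t ih =>
    by_cases h' : s ≤ cnt t ω
    · obtain ⟨u, hu, e⟩ := ih h'
      exact ⟨u, by omega, e⟩
    · exact ⟨t + 1, le_rfl, by have := cnt_succ_le t ω; omega⟩

lemma succTime_le (s : ℕ) (ω : ℕ → Bool) (t : ℕ) (h : cnt t ω = s) : succTime s ω ≤ (t : ℕ∞) :=
  sInf_le ⟨t, h, rfl⟩

lemma cnt_of_succTime (s : ℕ) (ω : ℕ → Bool) (t : ℕ) (h : succTime s ω = (t : ℕ∞)) :
    cnt t ω = s := by
  unfold succTime at h
  have hne : ((fun t : ℕ => (t : ℕ∞)) ''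
    {t : ℕ | ((Finset.range t).filter fun i => ω i = true).card = s}).Nonempty := by
    by_contra hc
    rw [Set.not_nonempty_iff_eq_empty] at hc
    rw [hc, sInf_empty] at h
    exact absurd h (by simp)
  obtain ⟨u, hu, e⟩ := csInf_mem hne
  rw [h] at e
  have : u = t := ENat.natCast_inj.1 e
  subst this
  exact hu

lemma chern (p : ℝ) (hp0 : 0 < p) (hp1 : p ≤ 1)
    (μ : Measure (ℕ → Bool))
    (hμ : ∀ (S : Finset ℕ) (g : ℕ → Bool),
      μ {ω | ∀ i ∈ S, ω i = g i} = ∏ i ∈ S, ENNReal.ofReal (if g i then p else 1 - p))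
    (Q : ℕ → Prop) (c z : ℝ) (hc : 0 ≤ c) (hz : 0 ≤ z) (hQ : ∀ k, Q k → 1 ≤ c * z ^ k) (t : ℕ) :
    μ {ω | Q (cnt t ω)} ≤ ENNReal.ofReal (c * (p * z + (1 - p)) ^ t) := by
  have hq : 0 ≤ 1 - p := by linarith
  have hm : ∀ A ∈ (Finset.range t).powerset,
      μ {ω | ∀ i ∈ Finset.range t, ω i = decide (i ∈ A)} =
        ENNReal.ofReal (p ^ A.card * (1 - p) ^ (t - A.card)) := by
    intro A hA
    rw [Finset.mem_powerset] at hA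
    rw [hμ, ← ENNReal.ofReal_prod_of_nonneg]
    · congr 1
      simp only [decide_eq_true_eq]
      rw [Finset.prod_ite, Finset.prod_const, Finset.prod_const]
      have h1 : (Finset.range t).filter (fun i => i ∈ A) = A := by
        ext i; simp only [Finset.mem_filter]; exact ⟨fun h => h.2, fun h => ⟨hA h, h⟩⟩
      have h2 : (Finset.range t).filter (fun i => ¬ i ∈ A) = Finset.range t \ A := by
        ext i; simp
      rw [h1, h2, Finset.card_sdiff_of_subset hA, Finset.card_range]
    · intro i _
      split_ifs <;> linarith
  calc μ {ω | Q (cnt t ω)}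
      ≤ μ (⋃ A ∈ (Finset.range t).powerset.filter (fun A => Q A.card),
          {ω | ∀ i ∈ Finset.range t, ω i = decide (i ∈ A)}) := by
        apply measure_mono
        intro ω hω
        simp only [Set.mem_iUnion]
        refine ⟨(Finset.range t).filter fun i => ω i = true, ?_, ?_⟩
        · rw [Finset.mem_filter]
          exact ⟨Finset.mem_powerset.2 (Finset.filter_subset _ _), hω⟩
        · intro i hi
          have := Finset.mem_range.1 hi
          cases h : ω i <;> simp [h, this]
    _ ≤ ∑ A ∈ (Finset.range t).powerset.filter (fun A => Q A.card),
          μ {ω | ∀ i ∈ Finset.range t, ω i = decide (i ∈ A)} := measure_biUnion_finset_le _ _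
    _ ≤ ∑ A ∈ (Finset.range t).powerset.filter (fun A => Q A.card),
          ENNReal.ofReal (c * ((p * z) ^ A.card * (1 - p) ^ (t - A.card))) := by
        apply Finset.sum_le_sum
        intro A hA
        rw [Finset.mem_filter] at hA
        rw [hm A hA.1]
        apply ENNReal.ofReal_le_ofReal
        have := hQ _ hA.2
        have h0 : 0 ≤ p ^ A.card * (1 - p) ^ (t - A.card) := by positivity
        rw [mul_pow]
        nlinarith
    _ ≤ ∑ A ∈ (Finset.range t).powerset,
          ENNReal.ofReal (c * ((p * z) ^ A.card * (1 - p) ^ (t - A.card))) :=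
        Finset.sum_le_sum_of_subset (Finset.filter_subset _ _)
    _ = _ := by
        rw [← ENNReal.ofReal_sum_of_nonneg, ← Finset.mul_sum]
        · congr 2
          have := Finset.sum_pow_mul_eq_add_pow (p * z) (1 - p) (Finset.range t)
          rwa [Finset.card_range] at this
        · intro A _
          positivity

/-- The algorithm estimating the probability `p` with which a sampler produces a given string:
with probability at least `1 - 2ε`, if `p ≥ 2^(-n)` then `p/2 ≤ p̃ ≤ 2p` and the number of
sampling rounds is at most `2·s·(1/p)`, while if `p < 2^(-n)` then `p̃ ≤ 2^(-(n-1))`. -/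
theorem estimate_sampling_probability
    (n : ℕ) (hn : 0 < n) (ε p : ℝ) (hε0 : 0 < ε) (hε1 : ε < 1)
    (hp0 : 0 < p) (hp1 : p ≤ 1)
    (s : ℕ) (hs : 0 < s) (hsε : 4 * Real.logb 2 (1 / ε) ≤ (s : ℝ))
    (μ : Measure (ℕ → Bool)) [IsProbabilityMeasure μ]
    (hμ : ∀ (S : Finset ℕ) (g : ℕ → Bool),
      μ {ω | ∀ i ∈ S, ω i = g i} = ∏ i ∈ S, ENNReal.ofReal (if g i then p else 1 - p)) :
    ENNReal.ofReal (1 - 2 * ε) ≤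
      μ {ω | ((2 : ℝ) ^ (-(n : ℤ)) ≤ p →
              p / 2 ≤ pEst s n ω ∧ pEst s n ω ≤ 2 * p ∧
              ∃ t : ℕ, succTime s ω = (t : ℕ∞) ∧ (t : ℝ) ≤ 2 * (s : ℝ) * (1 / p)) ∧
             (p < (2 : ℝ) ^ (-(n : ℤ)) →
              pEst s n ω ≤ (2 : ℝ) ^ (-((n : ℤ) - 1)))} := by
  have hsR : (0:ℝ) < s := by exact_mod_cast hs
  have hε : Real.exp (-(s / 4 * Real.log 2)) ≤ ε := by
    have hl2 : 0 < Real.log 2 := Real.log_pos (by norm_num)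
    rw [← Real.le_log_iff_exp_le hε0] 
    have h1 : Real.logb 2 (1 / ε) ≤ s / 4 := by linarith
    rw [Real.logb, div_le_iff₀ hl2, one_div, Real.log_inv] at h1
    linarith
  have hl := Real.log_two_gt_d9
  have hl' := Real.log_two_lt_d9
  have e2 : (2:ℝ) ^ s = Real.exp (s * Real.log 2) := by
    rw [mul_comm, Real.exp_mul, Real.exp_log (by norm_num), Real.rpow_natCast]
  set t1 := ⌊2 * (s:ℝ) * (1 / p)⌋₊ with ht1
  set t2 := ⌊(s:ℝ) / (2 * p)⌋₊ with ht2
  have B1 : μ {ω | cnt t1 ω < s} ≤ ENNReal.ofReal ε := by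
    refine (chern p hp0 hp1 μ hμ (fun k => k < s) (2 ^ s / 2) (1 / 2) (by positivity) (by norm_num)
      ?_ t1).trans (ENNReal.ofReal_le_ofReal ?_)
    · intro k hk
      have : (2:ℝ) ^ (k + 1) ≤ 2 ^ s := pow_le_pow_right₀ (by norm_num) hk
      rw [one_div, inv_pow, ← div_eq_mul_inv, le_div_iff₀ (by positivity)]
      rw [pow_succ] at this
      linarith
    · have hx : p * (1 / 2) + (1 - p) = 1 - p / 2 := by ring
      rw [hx]
      have h0 : 0 ≤ (1 - p / 2) ^ t1 := pow_nonneg (by linarith) _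
      have ha : (1 - p / 2) ^ (t1 + 1) ≤ Real.exp (-s) := by
        calc (1 - p / 2) ^ (t1 + 1) ≤ (Real.exp (-(p / 2))) ^ (t1 + 1) := by
              apply pow_le_pow_left₀ (by linarith)
              have := Real.add_one_le_exp (-(p / 2))
              linarith
          _ = Real.exp (((t1 + 1 : ℕ) : ℝ) * -(p / 2)) := (Real.exp_nat_mul _ _).symm
          _ ≤ _ := by
              apply Real.exp_le_exp.2
              have := Nat.lt_floor_add_one (2 * (s:ℝ) * (1 / p))
              rw [← ht1, mul_one_div, div_lt_iff₀ hp0] at this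
              push_cast
              linarith
      have hb : (1 - p / 2) ^ t1 * (1 / 2) ≤ (1 - p / 2) ^ (t1 + 1) := by
        rw [pow_succ]
        exact mul_le_mul_of_nonneg_left (by linarith) h0
      calc 2 ^ s / 2 * (1 - p / 2) ^ t1 = 2 ^ s * ((1 - p / 2) ^ t1 * (1 / 2)) := by ring
        _ ≤ 2 ^ s * Real.exp (-s) := by
            apply mul_le_mul_of_nonneg_left (hb.trans ha) (by positivity)
        _ = Real.exp (s * Real.log 2 + -s) := by rw [Real.exp_add, e2]
        _ ≤ Real.exp (-(s / 4 * Real.log 2)) := by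
            apply Real.exp_le_exp.2
            nlinarith
        _ ≤ ε := hε
  have B2 : μ {ω | s ≤ cnt t2 ω} ≤ ENNReal.ofReal ε := by
    refine (chern p hp0 hp1 μ hμ (fun k => s ≤ k) ((2 ^ s)⁻¹) 2 (by positivity) (by norm_num)
      ?_ t2).trans (ENNReal.ofReal_le_ofReal ?_)
    · intro k hk
      have : (2:ℝ) ^ s ≤ 2 ^ k := pow_le_pow_right₀ (by norm_num) hk
      rw [mul_comm, ← div_eq_mul_inv, le_div_iff₀ (by positivity)]
      linarith
    · have hx : p * 2 + (1 - p) = p + 1 := by ring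
      rw [hx]
      have ha : (p + 1) ^ t2 ≤ Real.exp (s / 2) := by
        calc (p + 1) ^ t2 ≤ (Real.exp p) ^ t2 :=
              pow_le_pow_left₀ (by linarith) (Real.add_one_le_exp p) _
          _ = Real.exp (t2 * p) := (Real.exp_nat_mul _ _).symm
          _ ≤ _ := by
              apply Real.exp_le_exp.2
              have := Nat.floor_le (show 0 ≤ (s:ℝ) / (2 * p) by positivity)
              rw [← ht2, le_div_iff₀ (by positivity)] at this
              linarith
      calc (2 ^ s)⁻¹ * (p + 1) ^ t2 ≤ (2 ^ s)⁻¹ * Real.exp (s / 2) :=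
            mul_le_mul_of_nonneg_left ha (by positivity)
        _ = Real.exp (-(s * Real.log 2) + s / 2) := by rw [Real.exp_add, e2, Real.exp_neg]
        _ ≤ Real.exp (-(s / 4 * Real.log 2)) := by
            apply Real.exp_le_exp.2
            nlinarith
        _ ≤ ε := hε
  have h2n : (2:ℝ) ^ (-(n:ℤ)) = ((2:ℝ) ^ n)⁻¹ := by simp
  have h2n1 : (2:ℝ) ^ (-((n:ℤ) - 1)) = 2 * ((2:ℝ) ^ n)⁻¹ := by
    rw [neg_sub, sub_eq_add_neg, zpow_add₀ (by norm_num), h2n, zpow_one]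
  have hpow : (0:ℝ) < 2 ^ n := by positivity
  rw [ENNReal.ofReal_sub _ (by positivity), ENNReal.ofReal_one, tsub_le_iff_right, two_mul ε,
    ENNReal.ofReal_add hε0.le hε0.le, ← measure_univ (μ := μ)]
  refine le_trans ?_ (add_le_add le_rfl (add_le_add B1 B2))
  refine le_trans (measure_mono ?_) ((measure_union_le _ _).trans
    (add_le_add le_rfl (measure_union_le _ _)))
  intro ω _
  by_cases c1 : cnt t1 ω < s
  · exact Or.inr (Or.inl c1)
  by_cases c2 : s ≤ cnt t2 ω
  · exact Or.inr (Or.inr c2)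
  left
  -- lower bound on the stopping time
  have low : ∀ t : ℕ, succTime s ω = (t : ℕ∞) → (s:ℝ) / (2 * p) < t := by
    intro t ht
    have hc := cnt_of_succTime s ω t ht
    rw [← Nat.floor_lt (by positivity), ← ht2]
    by_contra hle
    have := cnt_mono ω (not_lt.1 hle)
    simp only at this
    omega
  obtain ⟨u, hu, hus⟩ := cnt_hit s ω t1 (not_lt.1 c1)
  have hle := succTime_le s ω u hus
  obtain ⟨T, hT⟩ := ENat.ne_top_iff_exists.1 (ne_top_of_le_ne_top (ENat.natCast_ne_top u) hle)
  have hTu : T ≤ u := by rw [← hT] at hle; exact_mod_cast hle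
  have hlow := low T hT.symm
  have hTpos : (0:ℝ) < T := lt_trans (by positivity) hlow
  have hup : (T:ℝ) ≤ 2 * s * (1 / p) :=
    le_trans (Nat.cast_le.2 (hTu.trans hu)) (Nat.floor_le (by positivity))
  have hsT : (s:ℝ) / T ≤ 2 * p := by
    rw [div_lt_iff₀ (by positivity)] at hlow
    rw [div_le_iff₀ hTpos]
    linarith
  refine ⟨fun hp => ?_, fun hp => ?_⟩
  · have hTn : T ≤ 2 * s * 2 ^ n := by
      have : (1 / p) ≤ 2 ^ n := by
        rw [h2n] at hp
        rw [one_div]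
        exact inv_le_of_inv_le₀ hpow hp
      have h3 : (T:ℝ) ≤ 2 * s * 2 ^ n :=
        hup.trans (mul_le_mul_of_nonneg_left this (by positivity))
      exact_mod_cast h3
    have hE : pEst s n ω = s / T := by
      unfold pEst
      rw [← hT, if_pos (by exact_mod_cast hTn), ENat.toNat_natCast]
    rw [hE]
    refine ⟨?_, hsT, T, hT.symm, hup⟩
    rw [le_div_iff₀ hTpos]
    rw [mul_one_div, le_div_iff₀ hp0] at hup
    linarith
  · rw [h2n1]
    rw [h2n] at hp
    unfold pEst
    rw [← hT, ENat.toNat_natCast]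
    split_ifs
    · linarith
    · rw [h2n]
      have : 0 < ((2:ℝ) ^ n)⁻¹ := by positivity
      linarith
end

section
/- Let ζ ∈ (0,1], let m be a positive integer, let p : Fin m → ℝ satisfy 0 < p i ≤ 1 for every i, let E : Fin m → Finset (List Bool) be a family of pairwise disjoint finite sets of binary strings, and let q be a weight assignment with 0 ≤ q i x ≤ p i for every i and every x ∈ E i. Call a pair (i, x) with x ∈ E i 'short' if (x.length) + 2·⌈log₂(x.length + 1)⌉ + 2 ≤ log₂(1/(p i)) − log₂(2/ζ). Then the total weight of short pairs satisfies ∑_{(i,x) short} q i x ≤ ζ/2. Consequently, if moreover ∑_i ∑_{x ∈ E i} q i x ≥ ζ, then the total weight of pairs that are not short is at least ζ/2. -/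
open scoped Classical

/-- A fingerprint `x` with associated probability `pi` is short (with slack `ζ`) if
`|x| + 2⌈log₂(|x|+1)⌉ + 2 ≤ log₂(1/pi) − log₂(2/ζ)`. -/
def IsShort (ζ pi : ℝ) (x : List Bool) : Prop :=
  (x.length : ℝ) + 2 * (⌈Real.logb 2 ((x.length : ℝ) + 1)⌉ : ℝ) + 2 ≤
    Real.logb 2 (1 / pi) - Real.logb 2 (2 / ζ)

theorem aux_card (S : Finset (List Bool)) (n : ℕ) :
    (S.filter (fun x => x.length = n)).card ≤ 2 ^ n := by
  have h : S.filter (fun x => x.length = n) ⊆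
      (Finset.univ : Finset (List.Vector Bool n)).image (fun v : List.Vector Bool n => v.toList) := by
    intro x hx
    rw [Finset.mem_filter] at hx
    exact Finset.mem_image.2 ⟨(⟨x, hx.2⟩ : List.Vector Bool n), Finset.mem_univ (α := List.Vector Bool n) _, rfl⟩
  refine (Finset.card_le_card h).trans (Finset.card_image_le.trans ?_)
  rw [Finset.card_univ, card_vector, Fintype.card_bool]

noncomputable def auxW (n : ℕ) : ℝ := ((2 : ℝ) ^ n)⁻¹ * (1 / (((n : ℝ) + 1) * (n + 2)))

theorem aux_tel (N : ℕ) :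
    ∑ n ∈ Finset.range N, (1 / (((n : ℝ) + 1) * (n + 2))) = 1 - 1 / ((N : ℝ) + 1) := by
  induction N with
  | zero => simp
  | succ k ih =>
    rw [Finset.sum_range_succ, ih]
    push_cast
    field_simp
    ring

theorem aux_kraft (S : Finset (List Bool)) : ∑ x ∈ S, auxW x.length ≤ 1 := by
  have hmaps : ∀ x ∈ S, x.length ∈ Finset.range (S.sup List.length + 1) := by
    intro x hx
    rw [Finset.mem_range]
    exact Nat.lt_succ_of_le (Finset.le_sup (f := List.length) hx)
  rw [← Finset.sum_fiberwise_of_maps_to hmaps]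
  calc _ ≤ ∑ n ∈ Finset.range (S.sup List.length + 1), (1 / (((n : ℝ) + 1) * (n + 2))) := by
        refine Finset.sum_le_sum fun n _ => ?_
        have h1 : ∑ x ∈ S.filter (fun x => x.length = n), auxW x.length
            = ((S.filter (fun x => x.length = n)).card : ℝ) * auxW n := by
          rw [← nsmul_eq_mul, ← Finset.sum_const]
          refine Finset.sum_congr rfl fun x hx => ?_
          rw [(Finset.mem_filter.1 hx).2]
        rw [h1]
        have h2 : ((S.filter (fun x => x.length = n)).card : ℝ) ≤ 2 ^ n := by
          exact_mod_cast aux_card S n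
        have h3 : 0 ≤ auxW n := by unfold auxW; positivity
        refine (mul_le_mul_of_nonneg_right h2 h3).trans (le_of_eq ?_)
        unfold auxW
        rw [← mul_assoc, mul_inv_cancel₀ (by positivity), one_mul]
    _ ≤ 1 := by
        rw [aux_tel]
        have : (0 : ℝ) ≤ 1 / (((S.sup List.length + 1 : ℕ) : ℝ) + 1) := by positivity
        linarith

theorem aux_short (ζ r : ℝ) (hζ0 : 0 < ζ) (hr : 0 < r) (x : List Bool) (h : IsShort ζ r x) :
    r ≤ ζ / 2 * auxW x.length := by
  unfold IsShort at h
  set n := x.length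
  have hn : (0 : ℝ) < (n : ℝ) + 1 := by positivity
  have hc : Real.logb 2 ((n : ℝ) + 1) ≤ (⌈Real.logb 2 ((n : ℝ) + 1)⌉ : ℝ) := Int.le_ceil _
  rw [one_div, Real.logb_inv, Real.logb_div (by norm_num) hζ0.ne',
    Real.logb_self_eq_one (by norm_num)] at h
  have hz : Real.logb 2 (ζ / 2 * (((2 : ℝ) ^ n)⁻¹ * (1 / (4 * ((n : ℝ) + 1) ^ 2))))
      = Real.logb 2 ζ - 1 - n - 2 - 2 * Real.logb 2 ((n : ℝ) + 1) := by
    rw [Real.logb_mul (by positivity) (by positivity), Real.logb_mul (by positivity) (by positivity),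
      Real.logb_div hζ0.ne' (by norm_num), Real.logb_inv, one_div, Real.logb_inv,
      Real.logb_mul (by positivity) (by positivity), Real.logb_pow, Real.logb_pow,
      Real.logb_self_eq_one (by norm_num)]
    have : Real.logb 2 4 = 2 := by
      rw [show (4 : ℝ) = 2 ^ 2 by norm_num, Real.logb_pow, Real.logb_self_eq_one (by norm_num)]
      norm_num
    rw [this]
    push_cast
    ring
  have h1 : r ≤ ζ / 2 * (((2 : ℝ) ^ n)⁻¹ * (1 / (4 * ((n : ℝ) + 1) ^ 2))) := by
    rw [← Real.logb_le_logb (b := 2) (by norm_num) hr (by positivity), hz]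
    linarith
  refine h1.trans ?_
  unfold auxW
  have h2 : ((n : ℝ) + 1) * (n + 2) ≤ 4 * ((n : ℝ) + 1) ^ 2 := by
    have : (0 : ℝ) ≤ n := by positivity
    nlinarith
  gcongr

/-- Via Kraft's inequality, the total weight of short good fingerprints is at most `ζ/2`;
hence if the total weight of good fingerprints is at least `ζ`, the total weight of good
fingerprints that are not short is at least `ζ/2`. -/
theorem short_fingerprints_have_small_weight
    (ζ : ℝ) (hζ0 : 0 < ζ) (hζ1 : ζ ≤ 1) (m : ℕ) (hm : 0 < m)
    (p : Fin m → ℝ) (hp : ∀ i, 0 < p i ∧ p i ≤ 1)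
    (E : Fin m → Finset (List Bool))
    (hdisj : ∀ i j, i ≠ j → Disjoint (E i) (E j))
    (q : Fin m → List Bool → ℝ)
    (hq : ∀ i, ∀ x ∈ E i, 0 ≤ q i x ∧ q i x ≤ p i) :
    (∑ i, ∑ x ∈ E i, (if IsShort ζ (p i) x then q i x else 0)) ≤ ζ / 2 ∧
    (ζ ≤ ∑ i, ∑ x ∈ E i, q i x →
      ζ / 2 ≤ ∑ i, ∑ x ∈ E i, (if IsShort ζ (p i) x then 0 else q i x)) := by
  have key : (∑ i, ∑ x ∈ E i, (if IsShort ζ (p i) x then q i x else 0)) ≤ ζ / 2 := by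
    calc _ ≤ ∑ i, ∑ x ∈ E i, ζ / 2 * auxW x.length := by
          refine Finset.sum_le_sum fun i _ => Finset.sum_le_sum fun x hx => ?_
          split_ifs with h
          · exact (hq i x hx).2.trans (aux_short ζ (p i) hζ0 (hp i).1 x h)
          · unfold auxW; positivity
      _ = ζ / 2 * ∑ x ∈ Finset.univ.biUnion E, auxW x.length := by
          rw [Finset.sum_biUnion (fun i _ j _ hij => hdisj i j hij), Finset.mul_sum]
          simp_rw [Finset.mul_sum]
      _ ≤ ζ / 2 * 1 := mul_le_mul_of_nonneg_left (aux_kraft _) (by positivity)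
      _ = ζ / 2 := mul_one _
  refine ⟨key, fun htot => ?_⟩
  have hsplit : ∑ i, ∑ x ∈ E i, q i x =
      (∑ i, ∑ x ∈ E i, (if IsShort ζ (p i) x then q i x else 0)) +
      ∑ i, ∑ x ∈ E i, (if IsShort ζ (p i) x then 0 else q i x) := by
    simp_rw [← Finset.sum_add_distrib]
    refine Finset.sum_congr rfl fun i _ => Finset.sum_congr rfl fun x _ => ?_
    split_ifs <;> simp
  linarith
end

section
/- The sum over all binary strings x (all elements of List Bool) of 2^{−( x.length + 2·⌈log₂(x.length + 1)⌉ + 2 )} is at most 1. Equivalently, ∑_{ℓ=0}^{∞} 2^{ℓ} · 2^{−( ℓ + 2·⌈log₂(ℓ+1)⌉ + 2 )} = ∑_{ℓ=0}^{∞} 2^{−2·⌈log₂(ℓ+1)⌉ − 2} ≤ 1. -/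
lemma ksd_term (l : ℕ) : (2 : ℝ) ^ (-(2 * ⌈Real.logb 2 ((l : ℝ) + 1)⌉ + 2)) ≤
    1 / ((l : ℝ) + 1) - 1 / ((l : ℝ) + 2) := by
  have hl : (0 : ℝ) ≤ l := Nat.cast_nonneg l
  set c := ⌈Real.logb 2 ((l : ℝ) + 1)⌉ with hc
  have h1 : (l : ℝ) + 1 ≤ (2 : ℝ) ^ c := by
    have h := Int.le_ceil (Real.logb 2 ((l : ℝ) + 1))
    rw [← hc, Real.logb_le_iff_le_rpow (by norm_num) (by positivity), Real.rpow_intCast] at h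
    exact h
  have h2 : (2 : ℝ) ^ (-(2 * c + 2)) = 1 / (4 * ((2 : ℝ) ^ c) ^ 2) := by
    rw [zpow_neg, zpow_add₀ (by norm_num), mul_comm 2 c, zpow_mul, one_div]
    norm_cast
    rw [mul_comm]
    norm_num
  rw [h2]
  have h3 : 1 / ((l : ℝ) + 1) - 1 / ((l : ℝ) + 2) = 1 / (((l : ℝ) + 1) * (l + 2)) := by
    field_simp
    ring
  rw [h3]
  apply one_div_le_one_div_of_le (by positivity)
  nlinarith

lemma ksd_range (n : ℕ) :
    ∑ l ∈ Finset.range n, (2 : ℝ) ^ (-(2 * ⌈Real.logb 2 ((l : ℝ) + 1)⌉ + 2)) ≤ 1 := by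
  have h : ∑ l ∈ Finset.range n, (2 : ℝ) ^ (-(2 * ⌈Real.logb 2 ((l : ℝ) + 1)⌉ + 2)) ≤
      1 - 1 / ((n : ℝ) + 1) := by
    induction n with
    | zero => simp
    | succ n ih =>
      rw [Finset.sum_range_succ]
      have := ksd_term n
      have e : ((n + 1 : ℕ) : ℝ) + 1 = n + 2 := by push_cast; ring
      rw [e]
      linarith
  have : (0 : ℝ) ≤ 1 / ((n : ℝ) + 1) := by positivity
  linarith

lemma ksd_mul (l : ℕ) : (2 : ℝ) ^ (l : ℤ) *
    (2 : ℝ) ^ (-((l : ℤ) + 2 * ⌈Real.logb 2 ((l : ℝ) + 1)⌉ + 2)) =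
    (2 : ℝ) ^ (-(2 * ⌈Real.logb 2 ((l : ℝ) + 1)⌉ + 2)) := by
  rw [← zpow_add₀ (by norm_num)]
  congr 1
  ring

lemma ksd_card (s : Finset (List Bool)) (l : ℕ) :
    (s.filter (fun x => x.length = l)).card ≤ 2 ^ l := by
  have h : (s.filter (fun x => x.length = l)) ⊆
      (Finset.univ : Finset (List.Vector Bool l)).image List.Vector.toList := by
    intro x hx
    rw [Finset.mem_filter] at hx
    exact Finset.mem_image.2 ⟨(⟨x, hx.2⟩ : List.Vector Bool l), Finset.mem_univ (α := List.Vector Bool l) _, rfl⟩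
  refine (Finset.card_le_card h).trans (Finset.card_image_le.trans ?_)
  rw [Finset.card_univ, card_vector, Fintype.card_bool]

lemma ksd_fin (s : Finset (List Bool)) : ∑ x ∈ s,
    (2 : ℝ) ^ (-((x.length : ℤ) + 2 * ⌈Real.logb 2 ((x.length : ℝ) + 1)⌉ + 2)) ≤ 1 := by
  have hm : ∀ x ∈ s, x.length ∈ Finset.range (s.sup List.length + 1) := fun x hx =>
    Finset.mem_range.2 (Nat.lt_succ_of_le (Finset.le_sup (f := List.length) hx))
  rw [← Finset.sum_fiberwise_of_maps_to hm]
  refine le_trans (Finset.sum_le_sum fun l _ => ?_) (ksd_range (s.sup List.length + 1))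
  rw [← ksd_mul l]
  rw [Finset.sum_congr rfl (g := fun _ =>
    (2 : ℝ) ^ (-((l : ℤ) + 2 * ⌈Real.logb 2 ((l : ℝ) + 1)⌉ + 2)))
    (fun x hx => by rw [(Finset.mem_filter.1 hx).2])]
  rw [Finset.sum_const, nsmul_eq_mul]
  apply mul_le_mul_of_nonneg_right _ (by positivity)
  exact_mod_cast ksd_card s l

/-- Kraft inequality computation for the self-delimiting encoding of length
`|x| + 2⌈log₂(|x|+1)⌉ + 2`: the sum over all binary strings `x` of
`2^{-(|x| + 2⌈log₂(|x|+1)⌉ + 2)}` is at most 1; equivalently, grouping by length,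
`∑_ℓ 2^ℓ · 2^{-(ℓ + 2⌈log₂(ℓ+1)⌉ + 2)} = ∑_ℓ 2^{-(2⌈log₂(ℓ+1)⌉ + 2)} ≤ 1`. -/
theorem kraft_self_delimiting :
    (∑' x : List Bool,
        (2 : ℝ) ^ (-((x.length : ℤ) + 2 * ⌈Real.logb 2 ((x.length : ℝ) + 1)⌉ + 2)) ≤ 1) ∧
    (∑' ℓ : ℕ, (2 : ℝ) ^ (ℓ : ℤ) *
        (2 : ℝ) ^ (-((ℓ : ℤ) + 2 * ⌈Real.logb 2 ((ℓ : ℝ) + 1)⌉ + 2)) =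
      ∑' ℓ : ℕ, (2 : ℝ) ^ (-(2 * ⌈Real.logb 2 ((ℓ : ℝ) + 1)⌉ + 2))) ∧
    (∑' ℓ : ℕ, (2 : ℝ) ^ (-(2 * ⌈Real.logb 2 ((ℓ : ℝ) + 1)⌉ + 2)) ≤ 1) := by
  refine ⟨tsum_le_of_sum_le' zero_le_one ksd_fin, tsum_congr ksd_mul, ?_⟩
  exact Real.tsum_le_of_sum_range_le (fun _ => by positivity) ksd_range
end

section
/- Let n, d₁, m₁, d₂, m₂ be natural numbers, let t_max be a real number, and let ε₁, ε₂ ≥ 0. Suppose C₁ : {0,1}ⁿ × {0,1}^{d₁} → {0,1}^{m₁} is a (t_max, ε₁) lossless conductor and C₂ : {0,1}^{m₁} × {0,1}^{d₂} → {0,1}^{m₂} is a (t_max + d₁, ε₂) lossless conductor. Then the composed function C : {0,1}ⁿ × {0,1}^{d₁+d₂} → {0,1}^{m₂} defined by C(x, (y₁, y₂)) := C₂(C₁(x, y₁), y₂) is a (t_max, ε₁ + ε₂) lossless conductor. -/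
/-- A probability mass function `P` on a type `V` has min-entropy at least `t` if
`P b ≤ 2^(-t)` for every `b`. -/
def MinEntropyGE {V : Type*} (P : PMF V) (t : ℝ) : Prop :=
  ∀ b : V, P b ≤ ENNReal.ofReal ((2 : ℝ) ^ (-t))

/-- Two probability mass functions on a finite type are `ε`-close if their statistical
distance `(1/2)·∑_b |P b − Q b|` is at most `ε`. -/
def EpsClose {V : Type*} [Fintype V] (P Q : PMF V) (ε : ℝ) : Prop :=
  (1 / 2) * ∑ b : V, |(P b).toReal - (Q b).toReal| ≤ ε

/-- The output distribution of `C : {0,1}ⁿ × {0,1}^d → {0,1}^m` on a source `X`: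
the distribution of `C (x, y)` where `x ∼ X` and `y` is uniform on `{0,1}^d`,
independently of `x`. -/
noncomputable def outputDist {n d m : ℕ}
    (C : (Fin n → Bool) × (Fin d → Bool) → (Fin m → Bool))
    (X : PMF (Fin n → Bool)) : PMF (Fin m → Bool) :=
  X.bind fun x => (PMF.uniformOfFintype (Fin d → Bool)).bind fun y => PMF.pure (C (x, y))

/-- `C` is a `t →_ε t'` condenser: for every source `X` of min-entropy at least `t`, the
output distribution of `C` on `X` is `ε`-close to some distribution of min-entropy
at least `t'`. -/
def IsCondenser {n d m : ℕ} (C : (Fin n → Bool) × (Fin d → Bool) → (Fin m → Bool))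
    (t t' ε : ℝ) : Prop :=
  ∀ X : PMF (Fin n → Bool), MinEntropyGE X t →
    ∃ Q : PMF (Fin m → Bool), MinEntropyGE Q t' ∧ EpsClose (outputDist C X) Q ε

/-- `C : {0,1}ⁿ × {0,1}^d → {0,1}^m` is a `(t_max, ε)` lossless conductor if it is a
`t →_ε (t + d)` condenser for every real `t ≤ t_max`. -/
def IsLosslessConductor {n d m : ℕ}
    (C : (Fin n → Bool) × (Fin d → Bool) → (Fin m → Bool)) (tmax ε : ℝ) : Prop :=
  ∀ t : ℝ, t ≤ tmax → IsCondenser C t (t + d) ε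

lemma uniform_split (d₁ d₂ : ℕ) {V : Type*}
    (g : (Fin d₁ → Bool) → (Fin d₂ → Bool) → PMF V) :
    ((PMF.uniformOfFintype (Fin (d₁ + d₂) → Bool)).bind fun z =>
      g (fun i => z (Fin.castAdd d₂ i)) (fun j => z (Fin.natAdd d₁ j))) =
    (PMF.uniformOfFintype (Fin d₁ → Bool)).bind fun y₁ =>
      (PMF.uniformOfFintype (Fin d₂ → Bool)).bind fun y₂ => g y₁ y₂ := by
  ext b
  simp only [PMF.bind_apply, tsum_fintype, PMF.uniformOfFintype_apply]
  rw [← (Fin.appendEquiv d₁ d₂ (α := Bool)).sum_comp, Fintype.sum_prod_type]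
  refine Finset.sum_congr rfl fun y₁ _ => ?_
  rw [Finset.mul_sum]
  refine Finset.sum_congr rfl fun y₂ _ => ?_
  rw [← mul_assoc, ← ENNReal.mul_inv (by simp) (by simp)]
  simp [Fin.appendEquiv, pow_add]

lemma bind_toReal {U V : Type*} [Fintype U] (P : PMF U) (f : U → PMF V) (b : V) :
    ((P.bind f) b).toReal = ∑ a, (P a).toReal * (f a b).toReal := by
  rw [PMF.bind_apply, tsum_fintype, ENNReal.toReal_sum]
  · simp
  · intro a _
    exact ENNReal.mul_ne_top (P.apply_ne_top a) ((f a).apply_ne_top b)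

lemma sum_toReal_one {V : Type*} [Fintype V] (P : PMF V) : ∑ b, (P b).toReal = 1 := by
  rw [← ENNReal.toReal_sum (fun b _ => P.apply_ne_top b), ← tsum_fintype (L := .unconditional V),
    P.tsum_coe]
  simp

lemma data_processing {U V : Type*} [Fintype U] [Fintype V] (P Q : PMF U) (f : U → PMF V) :
    ∑ b, |((P.bind f) b).toReal - ((Q.bind f) b).toReal| ≤
      ∑ a, |(P a).toReal - (Q a).toReal| := by
  calc _ ≤ ∑ b, ∑ a, |(P a).toReal - (Q a).toReal| * (f a b).toReal := by
        refine Finset.sum_le_sum fun b _ => ?_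
        rw [bind_toReal, bind_toReal, ← Finset.sum_sub_distrib]
        refine (Finset.abs_sum_le_sum_abs _ _).trans (Finset.sum_le_sum fun a _ => ?_)
        rw [← sub_mul, abs_mul, abs_of_nonneg (ENNReal.toReal_nonneg (a := f a b))]
    _ = _ := by
        rw [Finset.sum_comm]
        refine Finset.sum_congr rfl fun a _ => ?_
        rw [← Finset.mul_sum, sum_toReal_one, mul_one]

/-- Composition of lossless conductors: if `C₁` is a `(t_max, ε₁)` lossless conductor and
`C₂` is a `(t_max + d₁, ε₂)` lossless conductor, then
`C (x, (y₁, y₂)) := C₂ (C₁ (x, y₁), y₂)` is a `(t_max, ε₁ + ε₂)` lossless conductor. -/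
theorem losslessConductor_comp
    (n d₁ m₁ d₂ m₂ : ℕ) (tmax : ℝ) (ε₁ ε₂ : ℝ) (hε₁ : 0 ≤ ε₁) (hε₂ : 0 ≤ ε₂)
    (C₁ : (Fin n → Bool) × (Fin d₁ → Bool) → (Fin m₁ → Bool))
    (C₂ : (Fin m₁ → Bool) × (Fin d₂ → Bool) → (Fin m₂ → Bool))
    (h₁ : IsLosslessConductor C₁ tmax ε₁)
    (h₂ : IsLosslessConductor C₂ (tmax + d₁) ε₂) :
    IsLosslessConductor
      (fun z : (Fin n → Bool) × (Fin (d₁ + d₂) → Bool) =>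
        C₂ (C₁ (z.1, fun i => z.2 (Fin.castAdd d₂ i)), fun j => z.2 (Fin.natAdd d₁ j)))
      tmax (ε₁ + ε₂) := by
  intro t ht X hX
  obtain ⟨Q₁, hQ₁, hc₁⟩ := h₁ t ht X hX
  obtain ⟨Q₂, hQ₂, hc₂⟩ := h₂ (t + d₁) (by linarith) Q₁ hQ₁
  refine ⟨Q₂, ?_, ?_⟩
  · have : t + ((d₁ + d₂ : ℕ) : ℝ) = t + d₁ + d₂ := by push_cast; ring
    rw [this]
    exact hQ₂
  · have key : outputDist (fun z : (Fin n → Bool) × (Fin (d₁ + d₂) → Bool) =>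
        C₂ (C₁ (z.1, fun i => z.2 (Fin.castAdd d₂ i)), fun j => z.2 (Fin.natAdd d₁ j))) X
        = outputDist C₂ (outputDist C₁ X) := by
      unfold outputDist
      simp only [PMF.bind_bind, PMF.pure_bind]
      congr 1
      funext x
      exact uniform_split d₁ d₂ (fun y₁ y₂ => PMF.pure (C₂ (C₁ (x, y₁), y₂)))
    rw [key]
    unfold EpsClose at *
    have h3 : ∑ b, |(outputDist C₂ (outputDist C₁ X) b).toReal - (outputDist C₂ Q₁ b).toReal| ≤
        ∑ a, |(outputDist C₁ X a).toReal - (Q₁ a).toReal| := data_processing _ _ _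
    have h4 : ∑ b, |(outputDist C₂ (outputDist C₁ X) b).toReal - (Q₂ b).toReal| ≤
        ∑ b, |(outputDist C₂ (outputDist C₁ X) b).toReal - (outputDist C₂ Q₁ b).toReal| +
        ∑ b, |(outputDist C₂ Q₁ b).toReal - (Q₂ b).toReal| := by
      rw [← Finset.sum_add_distrib]
      exact Finset.sum_le_sum fun b _ => abs_sub_le _ _ _
    linarith
end
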